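/- arXiv:0709.0637 — 4 statements merged into one kernel-verified Lean document; each statement's English description precedes it below -/
import Mathlib

section
/- Let m ≥ 1 be an integer, t ∈ ℝ, h > 0, and let b_1, …, b_m be real numbers with b_j < 1 for every j. Then, with the convention s_0 = t, the Lebesgue integral over the open simplex {(s_1,…,s_m) ∈ ℝ^m : t < s_1 < s_2 < ⋯ < s_m < t+h} of the function ∏_{j=1}^m (s_j − s_{j−1})^{−b_j} equals h^{m − Σ_{j=1}^m b_j} · (∏_{j=1}^m Γ(1 − b_j)) / Γ(1 + m − Σ_{j=1}^m b_j). -/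
open MeasureTheory

lemma aux_beta {α β t T : ℝ} (hα : 0 < α) (hβ : 0 < β) (hT : t < T) :
    ∫⁻ x in Set.Ioo t T, ENNReal.ofReal ((x - t) ^ (α - 1) * (T - x) ^ (β - 1)) =
      ENNReal.ofReal ((T - t) ^ (α + β - 1) * ProbabilityTheory.beta α β) := by
  have hH : 0 < T - t := by linarith
  have hB := ProbabilityTheory.beta_pos hα hβ
  have himg : Set.image (fun y : ℝ => (T - t) * y + t) (Set.Ioo 0 1) = Set.Ioo t T := by
    rw [Set.image_affine_Ioo hH]
    congr 1 <;> ring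
  have h1 := ProbabilityTheory.lintegral_betaPDF_eq_one hα hβ
  rw [ProbabilityTheory.lintegral_betaPDF] at h1
  rw [← himg, lintegral_image_eq_lintegral_abs_deriv_mul (f' := fun _ => T - t) measurableSet_Ioo]
  · have : ∀ x ∈ Set.Ioo (0 : ℝ) 1, ENNReal.ofReal |T - t| *
        ENNReal.ofReal (((T - t) * x + t - t) ^ (α - 1) * (T - ((T - t) * x + t)) ^ (β - 1)) =
        ENNReal.ofReal ((T - t) ^ (α + β - 1) * ProbabilityTheory.beta α β) *
        ENNReal.ofReal (1 / ProbabilityTheory.beta α β * x ^ (α - 1) * (1 - x) ^ (β - 1)) := by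
      rintro x ⟨hx0, hx1⟩
      rw [← ENNReal.ofReal_mul (abs_nonneg _), ← ENNReal.ofReal_mul (by positivity)]
      congr 1
      rw [abs_of_pos hH, show (T - t) * x + t - t = (T - t) * x by ring,
        show T - ((T - t) * x + t) = (T - t) * (1 - x) by ring,
        Real.mul_rpow hH.le hx0.le, Real.mul_rpow hH.le (by linarith),
        show α + β - 1 = 1 + (α - 1) + (β - 1) by ring, Real.rpow_add hH, Real.rpow_add hH,
        Real.rpow_one]
      field_simp
    rw [setLIntegral_congr_fun measurableSet_Ioo this, lintegral_const_mul _ (by fun_prop), h1,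
      mul_one]
  · intro x _
    have := ((hasDerivAt_id x).const_mul (T - t)).add_const t
    simpa using this.hasDerivWithinAt
  · intro x _ y _ hxy
    have : (T - t) * x + t = (T - t) * y + t := hxy
    exact mul_left_cancel₀ hH.ne' (by linarith)

/-- Recursively defined integrand (with the indicator of the simplex). -/
noncomputable def auxG (T : ℝ) : (m : ℕ) → (Fin m → ℝ) → ℝ → (Fin m → ℝ) → ENNReal
  | 0, _, t, _ => if t < T then 1 else 0
  | (m + 1), b, t, s =>
      (if t < s 0 then ENNReal.ofReal ((s 0 - t) ^ (-(b 0))) else 0) *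
        auxG T m (Fin.tail b) (s 0) (Fin.tail s)

lemma aux_meas (T : ℝ) (m : ℕ) : ∀ (b : Fin m → ℝ),
    Measurable (fun p : ℝ × (Fin m → ℝ) => auxG T m b p.1 p.2) := by
  induction m with
  | zero =>
    intro b
    simp only [auxG]
    exact Measurable.ite (measurableSet_lt measurable_fst measurable_const)
      measurable_const measurable_const
  | succ m ih =>
    intro b
    simp only [auxG]
    have h0 : Measurable (fun p : ℝ × (Fin (m + 1) → ℝ) => p.2 0) := by fun_prop
    refine Measurable.mul ?_ ?_
    · exact Measurable.ite (measurableSet_lt measurable_fst h0) (by fun_prop) measurable_const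
    · have h2 : Measurable (fun p : ℝ × (Fin (m + 1) → ℝ) => (p.2 0, Fin.tail p.2)) := by
        unfold Fin.tail
        fun_prop
      exact (ih (Fin.tail b)).comp h2

lemma aux_int (T : ℝ) (m : ℕ) : ∀ (b : Fin m → ℝ) (_ : ∀ j, b j < 1) (t : ℝ),
    ∫⁻ s, auxG T m b t s = if t < T then ENNReal.ofReal
      ((T - t) ^ ((m : ℝ) - ∑ j, b j) * (∏ j, Real.Gamma (1 - b j)) /
      Real.Gamma (1 + (m : ℝ) - ∑ j, b j)) else 0 := by
  induction m with
  | zero =>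
    intro b hb t
    simp [auxG, volume_pi, Measure.pi_empty_univ]
  | succ m ih =>
    intro b hb t
    have hb' : ∀ j, Fin.tail b j < 1 := fun j => hb _
    have e := (volume_preserving_piFinSuccAbove (fun _ : Fin (m + 1) => ℝ) 0).symm
    rw [← e.lintegral_comp_emb (MeasurableEquiv.measurableEmbedding _)]
    have hcons : ∀ p : ℝ × (Fin m → ℝ),
        auxG T (m + 1) b t ((MeasurableEquiv.piFinSuccAbove (fun _ : Fin (m + 1) => ℝ) 0).symm p) =
        (if t < p.1 then ENNReal.ofReal ((p.1 - t) ^ (-(b 0))) else 0) *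
          auxG T m (Fin.tail b) p.1 p.2 := by
      intro p
      have h1 : (MeasurableEquiv.piFinSuccAbove (fun _ : Fin (m + 1) => ℝ) 0).symm p =
          (Fin.cons p.1 p.2 : Fin (m + 1) → ℝ) := by
        simp [MeasurableEquiv.piFinSuccAbove_symm_apply, Fin.insertNthEquiv]
      rw [h1]
      simp [auxG]
    have hm1 : Measurable (fun x : ℝ =>
        if t < x then ENNReal.ofReal ((x - t) ^ (-(b 0))) else 0) :=
      Measurable.ite (measurableSet_lt measurable_const measurable_id) (by fun_prop)
        measurable_const
    simp_rw [hcons]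
    have hmm : Measurable (fun p : ℝ × (Fin m → ℝ) =>
        (if t < p.1 then ENNReal.ofReal ((p.1 - t) ^ (-(b 0))) else 0) *
          auxG T m (Fin.tail b) p.1 p.2) :=
      (hm1.comp measurable_fst).mul (aux_meas T m _)
    have hfub := lintegral_prod (μ := (volume : Measure ℝ)) (ν := (volume : Measure (Fin m → ℝ)))
      _ hmm.aemeasurable
    refine hfub.trans ?_
    have hin : ∀ x : ℝ, ∫⁻ y, (if t < x then ENNReal.ofReal ((x - t) ^ (-(b 0))) else 0) *
          auxG T m (Fin.tail b) x y =
        (if t < x then ENNReal.ofReal ((x - t) ^ (-(b 0))) else 0) *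
          ∫⁻ y, auxG T m (Fin.tail b) x y := fun x =>
      lintegral_const_mul _ ((aux_meas T m _).comp measurable_prodMk_left)
    simp only [hin, ih _ hb']
    set a : ℝ := (m : ℝ) - ∑ j, Fin.tail b j with ha
    set P : ℝ := ∏ j, Real.Gamma (1 - Fin.tail b j) with hP
    have ha0 : 0 ≤ a := by
      have : ∑ j, Fin.tail b j ≤ ∑ j : Fin m, (1 : ℝ) :=
        Finset.sum_le_sum fun j _ => (hb' j).le
      simp at this
      linarith
    have hPpos : 0 < P := Finset.prod_pos fun j _ => Real.Gamma_pos_of_pos (by linarith [hb' j])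
    have hG : 0 < Real.Gamma (1 + a) := Real.Gamma_pos_of_pos (by linarith)
    have hind : ∀ x : ℝ, (if t < x then ENNReal.ofReal ((x - t) ^ (-(b 0))) else 0) *
        (if x < T then ENNReal.ofReal ((T - x) ^ a * P / Real.Gamma (1 + (m : ℝ) - ∑ j, Fin.tail b j))
          else 0) = (Set.Ioo t T).indicator (fun x => ENNReal.ofReal (P / Real.Gamma (1 + a)) *
          ENNReal.ofReal ((x - t) ^ ((1 - b 0) - 1) * (T - x) ^ ((1 + a) - 1))) x := by
      intro x
      rw [show 1 + (m : ℝ) - ∑ j, Fin.tail b j = 1 + a by rw [ha]; ring]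
      by_cases h1 : t < x
      · by_cases h2 : x < T
        · rw [Set.indicator_of_mem (show x ∈ Set.Ioo t T from ⟨h1, h2⟩), if_pos h1, if_pos h2]
          have h3 : 0 < x - t := by linarith
          have h4 : 0 < T - x := by linarith
          rw [← ENNReal.ofReal_mul (by positivity), ← ENNReal.ofReal_mul (by positivity)]
          congr 1
          rw [show 1 - b 0 - 1 = -b 0 by ring, show 1 + a - 1 = a by ring]
          ring
        · simp [h2]
      · simp [h1]
    simp only [hind]
    rw [lintegral_indicator measurableSet_Ioo, lintegral_const_mul _ (by fun_prop)]
    by_cases hT : t < T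
    · rw [aux_beta (by linarith [hb 0]) (by linarith) hT, if_pos hT,
        ← ENNReal.ofReal_mul (by positivity)]
      congr 1
      rw [Fin.sum_univ_succ, Fin.prod_univ_succ]
      change _ = _ ^ (_ - (_ + ∑ j, Fin.tail b j)) * (_ * P) /
        Real.Gamma (1 + _ - (_ + ∑ j, Fin.tail b j))
      have e1 : ((m + 1 : ℕ) : ℝ) - (b 0 + ∑ j, Fin.tail b j) = 1 - b 0 + (1 + a) - 1 := by
        rw [ha]; push_cast; ring
      have e2 : 1 + ((m + 1 : ℕ) : ℝ) - (b 0 + ∑ j, Fin.tail b j) = 1 - b 0 + (1 + a) := by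
        rw [ha]; push_cast; ring
      rw [e1, e2, ProbabilityTheory.beta]
      field_simp
    · simp [hT]

lemma aux_closed (T : ℝ) (m : ℕ) : ∀ (b : Fin m → ℝ) (t : ℝ) (s : Fin m → ℝ),
    auxG T m b t s =
      if ((∀ j : Fin m,
              (if (j : ℕ) = 0 then t
               else s ⟨(j : ℕ) - 1, lt_of_le_of_lt (Nat.sub_le _ _) j.isLt⟩) < s j) ∧
           (if h : m = 0 then t else s ⟨m - 1, by omega⟩) < T) then
      ENNReal.ofReal (∏ j : Fin m,
        (s j - (if (j : ℕ) = 0 then t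
          else s ⟨(j : ℕ) - 1, lt_of_le_of_lt (Nat.sub_le _ _) j.isLt⟩)) ^ (-(b j))) else 0 := by
  induction m with
  | zero => intro b t s; simp [auxG]
  | succ m ih =>
    intro b t s
    have hprev : ∀ i : Fin m, (if ((i.succ : Fin (m + 1)) : ℕ) = 0 then t
          else s ⟨((i.succ : Fin (m + 1)) : ℕ) - 1,
            lt_of_le_of_lt (Nat.sub_le _ _) i.succ.isLt⟩) =
        (if (i : ℕ) = 0 then s 0
          else Fin.tail s ⟨(i : ℕ) - 1, lt_of_le_of_lt (Nat.sub_le _ _) i.isLt⟩) := by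
      intro i
      rw [if_neg (by simp)]
      split_ifs with h
      · congr 1
        ext
        simp [h]
      · unfold Fin.tail
        congr 1
        ext
        simp
        omega
    have hlast : (if h : m + 1 = 0 then t else s ⟨m + 1 - 1, by omega⟩) =
        (if h : m = 0 then s 0 else Fin.tail s ⟨m - 1, by omega⟩) := by
      rw [dif_neg (by omega)]
      split_ifs with h
      · congr 1
        ext
        simp [h]
      · unfold Fin.tail
        congr 1
        ext
        simp
        omega
    rw [auxG, ih, hlast, Fin.prod_univ_succ]
    simp only [Fin.forall_fin_succ, hprev]
    simp only [Fin.val_zero, if_true]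
    by_cases h1 : t < s 0
    · simp only [h1, if_true, true_and]
      rw [mul_ite, mul_zero, ENNReal.ofReal_mul (Real.rpow_nonneg (by linarith) _)]
      rfl
    · simp [h1]

/-- Dirichlet-type simplex integral identity (Ehm): for `m ≥ 1`, `t ∈ ℝ`, `h > 0`
and exponents `b j < 1`, with the convention `s₀ = t`,
`∫_{t < s₁ < ⋯ < s_m < t+h} ∏ (s_j - s_{j-1})^{-b_j} ds
  = h^{m - ∑ b_j} · ∏ Γ(1 - b_j) / Γ(1 + m - ∑ b_j)`. -/
theorem simplex_integral_identity (m : ℕ) (hm : 1 ≤ m) (t h : ℝ) (hh : 0 < h)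
    (b : Fin m → ℝ) (hb : ∀ j, b j < 1) :
    ∫ s : Fin m → ℝ in
      {s | (∀ j : Fin m,
              (if (j : ℕ) = 0 then t
               else s ⟨(j : ℕ) - 1, lt_of_le_of_lt (Nat.sub_le _ _) j.isLt⟩) < s j) ∧
           s ⟨m - 1, by omega⟩ < t + h},
      ∏ j : Fin m,
        (s j - (if (j : ℕ) = 0 then t
                else s ⟨(j : ℕ) - 1, lt_of_le_of_lt (Nat.sub_le _ _) j.isLt⟩)) ^ (-(b j)) =
    h ^ ((m : ℝ) - ∑ j, b j) * (∏ j, Real.Gamma (1 - b j)) /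
      Real.Gamma (1 + (m : ℝ) - ∑ j, b j) := by
  set S : Set (Fin m → ℝ) := {s | (∀ j : Fin m,
              (if (j : ℕ) = 0 then t
               else s ⟨(j : ℕ) - 1, lt_of_le_of_lt (Nat.sub_le _ _) j.isLt⟩) < s j) ∧
           s ⟨m - 1, by omega⟩ < t + h} with hS
  have hmp : ∀ j : Fin m, Measurable (fun s : Fin m → ℝ => (if (j : ℕ) = 0 then t
               else s ⟨(j : ℕ) - 1, lt_of_le_of_lt (Nat.sub_le _ _) j.isLt⟩)) := by
    intro j
    split_ifs <;> fun_prop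
  have hSm : MeasurableSet S := by
    rw [hS, Set.ofPred_and, Set.ofPred_forall]
    exact (MeasurableSet.iInter fun j => measurableSet_lt (hmp j) (measurable_pi_apply j)).inter
      (measurableSet_lt (measurable_pi_apply _) measurable_const)
  have hfm : Measurable (fun s : Fin m → ℝ => ∏ j : Fin m,
        (s j - (if (j : ℕ) = 0 then t
          else s ⟨(j : ℕ) - 1, lt_of_le_of_lt (Nat.sub_le _ _) j.isLt⟩)) ^ (-(b j))) :=
    Finset.measurable_prod _ fun j _ => ((measurable_pi_apply j).sub (hmp j)).pow_const _
  rw [integral_eq_lintegral_of_nonneg_ae _ hfm.aestronglyMeasurable]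
  · rw [← lintegral_indicator hSm]
    have hI := aux_int (t + h) m b hb t
    rw [if_pos (by linarith), add_sub_cancel_left] at hI
    have hEq : ∫⁻ s, auxG (t + h) m b t s = ∫⁻ s, S.indicator (fun s => ENNReal.ofReal (∏ j : Fin m,
        (s j - (if (j : ℕ) = 0 then t
          else s ⟨(j : ℕ) - 1, lt_of_le_of_lt (Nat.sub_le _ _) j.isLt⟩)) ^ (-(b j)))) s := by
      refine lintegral_congr fun s => ?_
      rw [aux_closed, dif_neg (by omega), Set.indicator_apply]
      rfl
    rw [← hEq, hI, ENNReal.toReal_ofReal]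
    have hsum : ∑ j, b j ≤ ∑ j : Fin m, (1 : ℝ) := Finset.sum_le_sum fun j _ => (hb j).le
    simp at hsum
    have hP : 0 < ∏ j, Real.Gamma (1 - b j) :=
      Finset.prod_pos fun j _ => Real.Gamma_pos_of_pos (by linarith [hb j])
    have hG : 0 < Real.Gamma (1 + (m : ℝ) - ∑ j, b j) := Real.Gamma_pos_of_pos (by linarith)
    positivity
  · filter_upwards [ae_restrict_mem hSm] with s hs
    exact Finset.prod_nonneg fun j _ => Real.rpow_nonneg (sub_nonneg.2 (hs.1 j).le) _
end

section
/- Let a < b be real numbers and let H : ℝ → ℝ be measurable. If the Lebesgue double integral ∫_a^b ∫_a^b |t−s|^{−H(t)} ds dt is finite, then H(t) < 1 for Lebesgue-almost every t ∈ [a,b]. -/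
open MeasureTheory

/-- If the double integral `∫_a^b ∫_a^b |t-s|^{-H(t)} ds dt` is finite, then `H(t) < 1`
for Lebesgue-almost every `t ∈ [a,b]`. -/
theorem hurst_lt_one_of_integral_finite (a b : ℝ) (hab : a < b)
    (H : ℝ → ℝ) (hH : Measurable H)
    (hfin : (∫⁻ t in Set.Icc a b, ∫⁻ s in Set.Icc a b,
        ENNReal.ofReal (|t - s| ^ (-(H t)))) ≠ ⊤) :
    ∀ᵐ t : ℝ, t ∈ Set.Icc a b → H t < 1 := by
  have hm : Measurable (fun p : ℝ × ℝ => ENNReal.ofReal (|p.1 - p.2| ^ (-(H p.1)))) := by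
    have h1 : Measurable (fun p : ℝ × ℝ => |p.1 - p.2|) :=
      (measurable_fst.sub measurable_snd).abs
    exact (h1.pow (hH.comp measurable_fst).neg).ennreal_ofReal
  have hae := ae_lt_top (Measurable.lintegral_prod_right' (ν := volume.restrict (Set.Icc a b)) hm)
    hfin
  rw [ae_restrict_iff' measurableSet_Icc] at hae
  filter_upwards [hae] with t ht hmem
  have hlt := ht hmem
  by_contra hge
  push Not at hge
  have hmeas : Measurable (fun s : ℝ => |t - s| ^ (-(H t))) :=
    ((measurable_const.sub measurable_id).abs).pow_const _
  have hint : IntegrableOn (fun s : ℝ => |t - s| ^ (-(H t))) (Set.Icc a b) := by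
    refine ⟨hmeas.aestronglyMeasurable, ?_⟩
    rw [hasFiniteIntegral_iff_ofReal
      (Filter.Eventually.of_forall fun s => Real.rpow_nonneg (abs_nonneg _) _)]
    exact hlt
  have hinv : IntegrableOn (fun s : ℝ => (s - t)⁻¹) (Set.Icc a b) := by
    refine Integrable.mono' (hint.const_mul ((b - a) ^ (H t - 1)))
      (measurable_id.sub measurable_const).inv.aestronglyMeasurable ?_
    rw [ae_restrict_iff' measurableSet_Icc]
    refine Filter.Eventually.of_forall fun s hs => ?_
    have hL : |t - s| ≤ b - a := by
      rw [abs_le]; constructor <;> linarith [hs.1, hs.2, hmem.1, hmem.2]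
    rw [norm_inv, Real.norm_eq_abs, abs_sub_comm]
    rcases (abs_nonneg (t - s)).eq_or_lt with h0 | hpos
    · rw [← h0, inv_zero]
      exact mul_nonneg (Real.rpow_nonneg (by linarith) _) (Real.rpow_nonneg le_rfl _)
    · calc |t - s|⁻¹ = |t - s| ^ (H t - 1) * |t - s| ^ (-(H t)) := by
            rw [← Real.rpow_add hpos, ← Real.rpow_neg_one]; congr 1; ring
        _ ≤ _ := mul_le_mul_of_nonneg_right
            (Real.rpow_le_rpow hpos.le hL (by linarith)) (Real.rpow_nonneg hpos.le _)
  have hii : IntervalIntegrable (fun s : ℝ => (s - t)⁻¹) volume a b :=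
    (intervalIntegrable_iff_integrableOn_Icc_of_le hab.le).2 hinv
  rcases intervalIntegrable_sub_inv_iff.1 hii with h | h
  · exact hab.ne h
  · exact h (by rwa [Set.uIcc_of_le hab.le])
end

section
/- Let t₀ ∈ ℝ, δ > 0, let B : [t₀, t₀+δ] → ℝ be continuous, and let L : ℝ → [0,∞) be a measurable function such that for every measurable g : ℝ → [0,∞), ∫_{t₀}^{t₀+δ} g(B(s)) ds = ∫_ℝ g(x) L(x) dx. Then δ ≤ 2 · (sup_{x ∈ ℝ} L(x)) · sup_{s ∈ [t₀,t₀+δ]} |B(s) − B(t₀)| (an inequality in [0,∞]). -/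
open MeasureTheory ENNReal

/-- Inequality (29): if `L` is an occupation density of a continuous function `B` on
`[t₀, t₀+δ]` (i.e. the occupation density formula holds), then
`δ ≤ 2 (sup_x L(x)) · sup_{s ∈ [t₀,t₀+δ]} |B(s) - B(t₀)|`, as an inequality in `[0,∞]`. -/
theorem length_le_two_mul_sup_localTime_mul_sup_osc
    (t₀ δ : ℝ) (hδ : 0 < δ) (B : ℝ → ℝ) (hB : ContinuousOn B (Set.Icc t₀ (t₀ + δ)))
    (L : ℝ → ℝ) (hLmeas : Measurable L) (hLnn : ∀ x, 0 ≤ L x)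
    (hocc : ∀ g : ℝ → ℝ≥0∞, Measurable g →
      ∫⁻ s in Set.Icc t₀ (t₀ + δ), g (B s) = ∫⁻ x : ℝ, g x * ENNReal.ofReal (L x)) :
    ENNReal.ofReal δ ≤
      2 * (⨆ x : ℝ, ENNReal.ofReal (L x)) *
        ⨆ s ∈ Set.Icc t₀ (t₀ + δ), ENNReal.ofReal |B s - B t₀| := by
  set R : ℝ≥0∞ := ⨆ s ∈ Set.Icc t₀ (t₀ + δ), ENNReal.ofReal |B s - B t₀| with hR
  set S : ℝ≥0∞ := ⨆ x : ℝ, ENNReal.ofReal (L x) with hS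
  have hm : MeasurableSet (Metric.closedEBall (B t₀) R) := Metric.isClosed_closedEBall.measurableSet
  have hgm : Measurable ((Metric.closedEBall (B t₀) R).indicator (fun _ => (1 : ℝ≥0∞))) :=
    measurable_const.indicator hm
  have h := hocc _ hgm
  have h1 : ∫⁻ s in Set.Icc t₀ (t₀ + δ),
      (Metric.closedEBall (B t₀) R).indicator (fun _ => (1 : ℝ≥0∞)) (B s) = ENNReal.ofReal δ := by
    have : ∫⁻ s in Set.Icc t₀ (t₀ + δ),
        (Metric.closedEBall (B t₀) R).indicator (fun _ => (1 : ℝ≥0∞)) (B s)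
        = ∫⁻ s in Set.Icc t₀ (t₀ + δ), (1 : ℝ≥0∞) := by
      refine setLIntegral_congr_fun measurableSet_Icc ?_
      intro s hs
      refine Set.indicator_of_mem ?_ _
      rw [Metric.mem_closedEBall, edist_dist, Real.dist_eq]
      exact le_iSup₂ (f := fun s (_ : s ∈ Set.Icc t₀ (t₀ + δ)) =>
        ENNReal.ofReal |B s - B t₀|) s hs
    rw [this, setLIntegral_one, Real.volume_Icc, add_sub_cancel_left]
  rw [← h1, h]
  calc _ ≤ ∫⁻ x : ℝ, (Metric.closedEBall (B t₀) R).indicator (fun _ => (1 : ℝ≥0∞)) x * S := by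
        refine lintegral_mono fun x => ?_
        gcongr
        exact le_iSup (fun x => ENNReal.ofReal (L x)) x
    _ = 2 * R * S := by
        rw [lintegral_mul_const _ hgm, lintegral_indicator_const hm, one_mul]
        congr 1
        simp
    _ ≤ 2 * S * R := by rw [mul_right_comm]
end

section
/- Let x_n, x : [0,1] → ℝ be continuous functions such that x_n converges to x uniformly on [0,1], and let a ≤ b be real numbers such that the Lebesgue measure of {s ∈ [0,1] : x(s) = a or x(s) = b} is zero. Then for every t ∈ [0,1], ∫_0^t 1_{[a,b]}(x_n(s)) ds → ∫_0^t 1_{[a,b]}(x(s)) ds as n → ∞. -/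
open MeasureTheory Filter

/-- Continuity of the occupation-time functional (underlying Lemma 5.1): if continuous
functions `x n` converge uniformly on `[0,1]` to `x₀`, and the level sets `{x₀ = a}`,
`{x₀ = b}` have zero Lebesgue measure, then for every `t ∈ [0,1]`,
`∫_0^t 1_{[a,b]}(x n s) ds → ∫_0^t 1_{[a,b]}(x₀ s) ds`. -/
theorem occupation_time_tendsto_of_tendstoUniformly
    (x : ℕ → ℝ → ℝ) (x₀ : ℝ → ℝ)
    (hx : ∀ n, ContinuousOn (x n) (Set.Icc 0 1)) (hx₀ : ContinuousOn x₀ (Set.Icc 0 1))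
    (hconv : TendstoUniformlyOn x x₀ atTop (Set.Icc 0 1))
    (a b : ℝ) (hab : a ≤ b)
    (hnull : volume {s ∈ Set.Icc (0 : ℝ) 1 | x₀ s = a ∨ x₀ s = b} = 0) :
    ∀ t ∈ Set.Icc (0 : ℝ) 1,
      Tendsto
        (fun n => ∫ s in (0 : ℝ)..t, Set.indicator (Set.Icc a b) (fun _ => (1 : ℝ)) (x n s))
        atTop
        (nhds (∫ s in (0 : ℝ)..t, Set.indicator (Set.Icc a b) (fun _ => (1 : ℝ)) (x₀ s))) := by
  intro t ht
  have hsub : Set.uIoc (0 : ℝ) t ⊆ Set.Icc 0 1 := by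
    rw [Set.uIoc_of_le ht.1]
    exact fun s hs => ⟨hs.1.le, hs.2.trans ht.2⟩
  refine intervalIntegral.tendsto_integral_filter_of_dominated_convergence (fun _ => (1 : ℝ))
    ?_ ?_ ?_ ?_
  · refine Eventually.of_forall fun n => ?_
    have h1 : AEMeasurable (x n) (volume.restrict (Set.uIoc 0 t)) :=
      ((hx n).mono hsub).aemeasurable measurableSet_uIoc
    have h2 : Measurable (Set.indicator (Set.Icc a b) (fun _ => (1 : ℝ))) :=
      measurable_const.indicator measurableSet_Icc
    exact (h2.comp_aemeasurable h1).aestronglyMeasurable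
  · refine Eventually.of_forall fun n => Eventually.of_forall fun s _ => ?_
    by_cases h : x n s ∈ Set.Icc a b <;> simp [Set.indicator, h]
  · exact intervalIntegrable_const
  · have hae : ∀ᵐ s ∂(volume : Measure ℝ),
        ¬ (s ∈ {s ∈ Set.Icc (0 : ℝ) 1 | x₀ s = a ∨ x₀ s = b}) :=
      measure_eq_zero_iff_ae_notMem.1 hnull
    filter_upwards [hae] with s hs hst
    have hs1 := hsub hst
    have hlim : Tendsto (fun n => x n s) atTop (nhds (x₀ s)) := hconv.tendsto_at hs1
    have hne : x₀ s ≠ a ∧ x₀ s ≠ b :=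
      ⟨fun h => hs ⟨hs1, Or.inl h⟩, fun h => hs ⟨hs1, Or.inr h⟩⟩
    refine tendsto_const_nhds.congr' ?_
    rcases lt_or_gt_of_ne hne.1 with h | h
    · filter_upwards [hlim.eventually (gt_mem_nhds h)] with n hn
      rw [Set.indicator_of_notMem (fun hh => absurd hh.1 (not_le.2 h)),
        Set.indicator_of_notMem (fun hh => absurd hh.1 (not_le.2 hn))]
    · rcases lt_or_gt_of_ne hne.2 with h' | h'
      · filter_upwards [hlim.eventually (lt_mem_nhds h), hlim.eventually (gt_mem_nhds h')]
          with n hn hn'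
        rw [Set.indicator_of_mem (show x₀ s ∈ Set.Icc a b from ⟨h.le, h'.le⟩),
          Set.indicator_of_mem (show x n s ∈ Set.Icc a b from ⟨hn.le, hn'.le⟩)]
      · filter_upwards [hlim.eventually (lt_mem_nhds h')] with n hn
        rw [Set.indicator_of_notMem (fun hh => absurd hh.2 (not_le.2 h')),
          Set.indicator_of_notMem (fun hh => absurd hh.2 (not_le.2 hn))]
end
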